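/- Let d ≥ 1, T ≥ 1, and 0 < δ ≤ 1/4. Let V ⊆ {−1,+1}^d be a set with |V| ≥ (2/√e)^{d/2} and |V| ≥ 2, such that any two distinct elements of V differ in at least d/4 coordinates. For each α ∈ V let Q_α be the probability mass function on {1,…,d} × {0,1} with Q_α(i, 1) = (1/d)(1/2 + α_i δ) and Q_α(i, 0) = (1/d)(1/2 − α_i δ), and let Q_α^{⊗T} be its T-fold product on ({1,…,d} × {0,1})^T. Then for every function A : ({1,…,d} × {0,1})^T → V, max_{α ∈ V} Q_α^{⊗T}( { ω : A(ω) ≠ α } ) ≥ 1 − (16 T δ² + log 2) / ((d/2)·log(2/√e)). -/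

import Mathlib

/-!
The average over `α ∈ V` of the success probability `p_α = Q_α^{⊗T}(A = α)` is bounded by Fano's
method, comparing every `Q_α^{⊗T}` with the single uniform distribution `R` on `(Fin d × Bool)^T`.

Write `N = |V|` and let `c` bound all second moments `∑ Q_α² / R`. For `m = N` on `{A = α}` and
`m = 1` elsewhere, `log y ≤ y - 1` applied to `y = Q_α / (R c)` and to `y = R m / (2 Q_α)` gives
`log (m / (2 c)) ≤ Q_α / (R c) + R m / (2 Q_α) - 2`. Multiplying by `Q_α` and summing over the
outcomes and over `V`, the right side becomes at most `N + (2 N - 1) / 2 - 2 N ≤ 0`, because each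
outcome lies in exactly one event `{A = α}`. Hence `(∑ p_α) log N ≤ N (log 2 + log c)`
(`fano_second_moment`). This replaces the mutual information by the second moment, which is
multiplicative over the `T` queries: one query contributes `1 + 4 δ²`, so
`log c = T log (1 + 4 δ²) ≤ 4 T δ²`. Some `α` does no better than the average, and
`log N ≥ (d / 2) log (2 / √e) > 0`.
-/

/-- The probability mass function on `{1,…,d} × {0,1}` of the pair revealed by one
oracle query for the parameter `α`: a coordinate `i` chosen uniformly, then a
Bernoulli bit with parameter `1/2 + α_i δ`. -/
noncomputable def oracleQueryPMF (d : ℕ) (δ : ℝ) (α : Fin d → ℤ) : Fin d × Bool → ℝ :=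
  fun p => (1 / (d : ℝ)) * (if p.2 then 1 / 2 + (α p.1 : ℝ) * δ else 1 / 2 - (α p.1 : ℝ) * δ)

open Finset in
/-- Fano's inequality with the divergences to a common reference distribution `R` bounded through
the second moments `∑ Q² / R ≤ c`. -/
lemma fano_second_moment {ι Ω : Type*} [DecidableEq ι] [Fintype Ω] (V : Finset ι)
    (hV : 0 < V.card) (Q : ι → Ω → ℝ) (R : Ω → ℝ) (c : ℝ) (hc : 0 < c)
    (hQ : ∀ α ∈ V, ∀ ω, 0 < Q α ω) (hR : ∀ ω, 0 < R ω)
    (hQ1 : ∀ α ∈ V, ∑ ω, Q α ω = 1) (hR1 : ∑ ω, R ω = 1)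
    (hQR : ∀ α ∈ V, ∑ ω, Q α ω ^ 2 / R ω ≤ c)
    (A : Ω → ι) (hA : ∀ ω, A ω ∈ V) :
    (∑ α ∈ V, ∑ ω with A ω = α, Q α ω) * Real.log V.card ≤
      V.card * (Real.log 2 + Real.log c) := by
  set N : ℝ := (V.card : ℝ) with hN
  have hN1 : 1 ≤ N := by rw [hN]; exact_mod_cast hV
  have hpt : ∀ α ∈ V, ∀ ω, (if A ω = α then Q α ω else 0) * Real.log N
      - Q α ω * (Real.log 2 + Real.log c) ≤
      Q α ω ^ 2 / R ω / c + (R ω + if A ω = α then (N - 1) * R ω else 0) / 2 - 2 * Q α ω := by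
    intro α hα ω
    have hq := hQ α hα ω
    have hr := hR ω
    have key : ∀ m : ℝ, 0 < m → Q α ω * (Real.log m - (Real.log 2 + Real.log c)) ≤
        Q α ω ^ 2 / R ω / c + m * R ω / 2 - 2 * Q α ω := by
      intro m hm
      have h1 := Real.log_le_sub_one_of_pos (show 0 < Q α ω / (R ω * c) by positivity)
      have h2 := Real.log_le_sub_one_of_pos (show 0 < R ω * m / (2 * Q α ω) by positivity)
      rw [Real.log_div (by positivity) (by positivity), Real.log_mul (by positivity) (by positivity)]
        at h1
      rw [Real.log_div (by positivity) (by positivity), Real.log_mul (by positivity) (by positivity),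
        Real.log_mul (by positivity) (by positivity)] at h2
      have h3 := mul_le_mul_of_nonneg_left (add_le_add h1 h2) hq.le
      have e : Q α ω * (Q α ω / (R ω * c) - 1 + (R ω * m / (2 * Q α ω) - 1)) =
          Q α ω ^ 2 / R ω / c + m * R ω / 2 - 2 * Q α ω := by
        field_simp
        ring
      rw [e] at h3
      refine le_trans (le_of_eq ?_) h3
      ring
    split_ifs
    · have := key N (by linarith)
      linarith
    · have := key 1 one_pos
      rw [Real.log_one] at this
      linarith
  have hsum := sum_le_sum fun α hα => sum_le_sum fun ω (_ : ω ∈ univ) => hpt α hα ω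
  -- Each outcome belongs to the single event `A ω = α` with `α = A ω`.
  have hpart : ∑ α ∈ V, ∑ ω, (if A ω = α then (N - 1) * R ω else 0) = N - 1 := by
    rw [sum_comm]
    simp [hA, ← mul_sum, hR1]
  have hL : ∑ α ∈ V, ∑ ω, ((if A ω = α then Q α ω else 0) * Real.log N
      - Q α ω * (Real.log 2 + Real.log c)) =
      (∑ α ∈ V, ∑ ω with A ω = α, Q α ω) * Real.log N - N * (Real.log 2 + Real.log c) := by
    simp_rw [sum_sub_distrib, ← sum_mul, sum_filter]
    rw [sum_congr rfl hQ1]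
    simp [hN]
  have hRt : ∑ α ∈ V, ∑ ω, (Q α ω ^ 2 / R ω / c
      + (R ω + if A ω = α then (N - 1) * R ω else 0) / 2 - 2 * Q α ω) =
      (∑ α ∈ V, ∑ ω, Q α ω ^ 2 / R ω) / c + (N + (N - 1)) / 2 - 2 * N := by
    simp_rw [sum_sub_distrib, sum_add_distrib, ← sum_div, sum_add_distrib, ← mul_sum]
    rw [sum_congr rfl hQ1, hpart, hR1]
    simp [hN]
  have hsec : (∑ α ∈ V, ∑ ω, Q α ω ^ 2 / R ω) / c ≤ N := by
    rw [div_le_iff₀ hc]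
    simpa [hN] using sum_le_sum hQR
  rw [hL, hRt] at hsum
  linarith

section
variable {d : ℕ} {δ : ℝ} {α : Fin d → ℤ}

lemma oracleQueryPMF_pos (hd : 1 ≤ d) (hδ_pos : 0 < δ) (hδ_le : δ ≤ 1 / 4)
    (hα : ∀ i, α i = 1 ∨ α i = -1) (p : Fin d × Bool) : 0 < oracleQueryPMF d δ α p := by
  have hd' : (0 : ℝ) < d := by exact_mod_cast hd
  unfold oracleQueryPMF
  refine mul_pos (by positivity) ?_
  rcases hα p.1 with h | h <;> rw [h] <;> split_ifs <;> push_cast <;> linarith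

lemma sum_oracleQueryPMF (hd : 1 ≤ d) : ∑ p, oracleQueryPMF d δ α p = 1 := by
  have hd' : (d : ℝ) ≠ 0 := by positivity
  have h : ∀ i, ∑ b, oracleQueryPMF d δ α (i, b) = 1 / d := by
    intro i
    simp only [oracleQueryPMF, Fintype.sum_bool, if_true, Bool.false_eq_true, if_false]
    ring
  rw [Fintype.sum_prod_type, Finset.sum_congr rfl fun i _ => h i]
  simp [hd']

/-- The second moment of one query relative to the uniform distribution on `Fin d × Bool`. -/
lemma sum_oracleQueryPMF_sq (hd : 1 ≤ d) (hα : ∀ i, α i = 1 ∨ α i = -1) :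
    ∑ p, oracleQueryPMF d δ α p ^ 2 / (1 / (2 * d)) = 1 + 4 * δ ^ 2 := by
  have hd' : (d : ℝ) ≠ 0 := by positivity
  have h : ∀ i, ∑ b, oracleQueryPMF d δ α (i, b) ^ 2 / (1 / (2 * d)) = (1 + 4 * δ ^ 2) / d := by
    intro i
    simp only [oracleQueryPMF, Fintype.sum_bool, if_true, Bool.false_eq_true, if_false]
    rcases hα i with h | h <;> rw [h] <;> push_cast <;> field_simp <;> ring
  rw [Fintype.sum_prod_type, Finset.sum_congr rfl fun i _ => h i]
  simp [mul_div_cancel₀, hd']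

end

lemma log_two_div_sqrt_exp_pos : 0 < Real.log (2 / Real.sqrt (Real.exp 1)) := by
  rw [Real.log_div two_ne_zero (by positivity), Real.log_sqrt (by positivity), Real.log_exp]
  have := Real.log_two_gt_d9
  linarith

/-- Fano-type lower bound: any estimator `A` of the sign vector `α ∈ V` from `T`
oracle queries errs, for some `α ∈ V`, with probability at least
`1 − (16Tδ² + log 2)/((d/2)·log(2/√e))` under the `T`-fold product distribution
`Q_α^{⊗T}`. -/
theorem fano_lower_bound_for_oracle (d T : ℕ) (hd : 1 ≤ d) (hT : 1 ≤ T)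
    (δ : ℝ) (hδ_pos : 0 < δ) (hδ_le : δ ≤ 1 / 4)
    (V : Finset (Fin d → ℤ))
    (hV_signs : ∀ α ∈ V, ∀ i : Fin d, α i = 1 ∨ α i = -1)
    (hV_card : (2 / Real.sqrt (Real.exp 1)) ^ ((d : ℝ) / 2) ≤ (V.card : ℝ))
    (hV_two : 2 ≤ V.card)
    (hV_sep : ∀ α ∈ V, ∀ β ∈ V, α ≠ β →
      (d : ℝ) / 4 ≤ (Finset.univ.filter fun i : Fin d => α i ≠ β i).card)
    (A : (Fin T → Fin d × Bool) → (Fin d → ℤ)) (hA : ∀ ω, A ω ∈ V) :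
    ∃ α ∈ V,
      1 - (16 * T * δ ^ 2 + Real.log 2) /
          ((d : ℝ) / 2 * Real.log (2 / Real.sqrt (Real.exp 1))) ≤
        ∑ ω ∈ Finset.univ.filter fun ω : Fin T → Fin d × Bool => A ω ≠ α,
          ∏ t : Fin T, oracleQueryPMF d δ α (ω t) := by
  have hd' : (0 : ℝ) < d := by exact_mod_cast hd
  set L : ℝ := (d : ℝ) / 2 * Real.log (2 / Real.sqrt (Real.exp 1)) with hL
  have hLpos : 0 < L := mul_pos (by positivity) log_two_div_sqrt_exp_pos
  have hLN : L ≤ Real.log V.card := by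
    have := Real.log_le_log (by positivity) hV_card
    rwa [Real.log_rpow (by positivity)] at this
  have hpos : ∀ α ∈ V, ∀ ω : Fin T → Fin d × Bool, 0 < ∏ t, oracleQueryPMF d δ α (ω t) :=
    fun α hα ω => Finset.prod_pos fun t _ =>
      oracleQueryPMF_pos hd hδ_pos hδ_le (hV_signs α hα) _
  have hone : ∀ α ∈ V, ∑ ω : Fin T → Fin d × Bool, ∏ t, oracleQueryPMF d δ α (ω t) = 1 := by
    intro α _
    rw [← Fintype.prod_sum fun (_ : Fin T) p => oracleQueryPMF d δ α p]
    simp [sum_oracleQueryPMF hd]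
  have hfano := fano_second_moment V (by omega)
    (fun α (ω : Fin T → Fin d × Bool) => ∏ t, oracleQueryPMF d δ α (ω t))
    (fun _ => ∏ _t : Fin T, (1 / (2 * d) : ℝ)) ((1 + 4 * δ ^ 2) ^ T) (by positivity)
    hpos (fun _ => by positivity) hone
    (by
      rw [← Fintype.prod_sum fun (_ : Fin T) (_ : Fin d × Bool) => (1 / (2 * d) : ℝ)]
      refine Finset.prod_eq_one fun _ _ => ?_
      simp only [Finset.sum_const, Finset.card_univ, Fintype.card_prod, Fintype.card_fin,
        Fintype.card_bool, nsmul_eq_mul]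
      push_cast
      field_simp)
    (by
      intro α hα
      simp_rw [← Finset.prod_pow, ← Finset.prod_div_distrib]
      rw [← Fintype.prod_sum fun (_ : Fin T) p => oracleQueryPMF d δ α p ^ 2 / (1 / (2 * d))]
      simp [-one_div, sum_oracleQueryPMF_sq hd (hV_signs α hα)])
    A hA
  have hlogc : Real.log ((1 + 4 * δ ^ 2) ^ T) ≤ 16 * T * δ ^ 2 := by
    rw [Real.log_pow]
    have h := Real.log_le_sub_one_of_pos (show 0 < 1 + 4 * δ ^ 2 by positivity)
    have h' : Real.log (1 + 4 * δ ^ 2) ≤ 16 * δ ^ 2 := by nlinarith [sq_nonneg δ]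
    calc (T : ℝ) * Real.log (1 + 4 * δ ^ 2) ≤ T * (16 * δ ^ 2) := by gcongr
      _ = 16 * T * δ ^ 2 := by ring
  by_contra! hcon
  -- If every error probability were too small, every success probability would exceed the quotient.
  have hsucc : ∀ α ∈ V, (16 * T * δ ^ 2 + Real.log 2) / L <
      ∑ ω with A ω = α, ∏ t, oracleQueryPMF d δ α (ω t) := by
    intro α hα
    have h1 := hcon α hα
    have h2 := Finset.sum_filter_add_sum_filter_not Finset.univ (fun ω => A ω = α)
      (fun ω : Fin T → Fin d × Bool => ∏ t, oracleQueryPMF d δ α (ω t))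
    rw [hone α hα] at h2
    linarith
  have hlt := Finset.sum_lt_sum_of_nonempty (Finset.card_pos.mp (by omega)) hsucc
  rw [Finset.sum_const, nsmul_eq_mul, ← mul_div_assoc, div_lt_iff₀ hLpos] at hlt
  have hnn : 0 ≤ ∑ α ∈ V, ∑ ω with A ω = α, ∏ t, oracleQueryPMF d δ α (ω t) :=
    Finset.sum_nonneg fun α hα => Finset.sum_nonneg fun ω _ => (hpos α hα ω).le
  have h1 := mul_le_mul_of_nonneg_left hLN hnn
  have h2 : (V.card : ℝ) * (Real.log 2 + Real.log ((1 + 4 * δ ^ 2) ^ T)) ≤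
      V.card * (16 * T * δ ^ 2 + Real.log 2) := by
    gcongr ?_ * ?_
    linarith
  linarith
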